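/- Let Ω be a finite probability space, and let X : Ω → 𝒳 and Z : Ω → 𝒵 be random variables with 𝒳, 𝒵 finite and nonempty. Then H̃∞(X | Z) ≥ H∞(X) − log₂|𝒵|. -/

import Mathlib

open Finset Real

/-- Probability of an event `E` under the weight function `p` on a finite sample space. -/
noncomputable def pr {Ω : Type*} [Fintype Ω] (p : Ω → ℝ) (E : Set Ω) : ℝ :=
  ∑ ω, E.indicator p ω

/-- `P[X = x]`. -/
noncomputable def prEq {Ω 𝒳 : Type*} [Fintype Ω] (p : Ω → ℝ) (X : Ω → 𝒳) (x : 𝒳) : ℝ :=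
  pr p {ω | X ω = x}

/-- `P[X = x | Y = y]`, taken to be `0` when `P[Y = y] = 0`. -/
noncomputable def condProb {Ω 𝒳 𝒴 : Type*} [Fintype Ω]
    (p : Ω → ℝ) (X : Ω → 𝒳) (x : 𝒳) (Y : Ω → 𝒴) (y : 𝒴) : ℝ :=
  if prEq p Y y = 0 then 0 else pr p {ω | X ω = x ∧ Y ω = y} / prEq p Y y

/-- Average min-entropy `H̃∞(X | Y)`. -/
noncomputable def avgMinEntropy {Ω 𝒳 𝒴 : Type*} [Fintype Ω]
    [Fintype 𝒳] [Nonempty 𝒳] [Fintype 𝒴]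
    (p : Ω → ℝ) (X : Ω → 𝒳) (Y : Ω → 𝒴) : ℝ :=
  - Real.logb 2 (∑ y : 𝒴, prEq p Y y *
      (Finset.univ.sup' Finset.univ_nonempty fun x : 𝒳 => condProb p X x Y y))

/-- Min-entropy `H∞(X)`. -/
noncomputable def minEntropy {Ω 𝒳 : Type*} [Fintype Ω] [Fintype 𝒳] [Nonempty 𝒳]
    (p : Ω → ℝ) (X : Ω → 𝒳) : ℝ :=
  - Real.logb 2 (Finset.univ.sup' Finset.univ_nonempty fun x : 𝒳 => prEq p X x)

/-!
The probability of guessing `X` after seeing `Z` is `∑ z, max_x P[X = x, Z = z]`. Each of its `|𝒵|`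
summands is at most `max_x P[X = x]`, and taking `-log₂` turns the factor `|𝒵|` into the loss.
-/

section Probability

variable {Ω 𝒳 𝒴 : Type*} [Fintype Ω] {p : Ω → ℝ}

theorem pr_nonneg (hp : ∀ ω, 0 ≤ p ω) (E : Set Ω) : 0 ≤ pr p E :=
  sum_nonneg fun _ _ ↦ Set.indicator_nonneg (fun ω _ ↦ hp ω) _

theorem pr_mono (hp : ∀ ω, 0 ≤ p ω) {E F : Set Ω} (h : E ⊆ F) : pr p E ≤ pr p F :=
  sum_le_sum fun ω _ ↦ Set.indicator_le_indicator_of_subset h hp ω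

theorem pr_univ (p : Ω → ℝ) : pr p Set.univ = ∑ ω, p ω := by
  simp only [pr, Set.indicator_univ]

theorem sum_pr_inter_fiber [Fintype 𝒴] (p : Ω → ℝ) (E : Set Ω) (Y : Ω → 𝒴) :
    ∑ y, pr p (E ∩ {ω | Y ω = y}) = pr p E := by
  classical
  simp only [pr]
  rw [sum_comm]
  simp [Set.inter_comm E, Set.indicator_apply, ite_and]

theorem sum_prEq [Fintype 𝒳] (p : Ω → ℝ) (X : Ω → 𝒳) : ∑ x, prEq p X x = ∑ ω, p ω := by
  simpa only [prEq, Set.univ_inter, pr_univ] using sum_pr_inter_fiber p Set.univ X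

theorem prEq_mul_condProb (hp : ∀ ω, 0 ≤ p ω) (X : Ω → 𝒳) (x : 𝒳) (Y : Ω → 𝒴) (y : 𝒴) :
    prEq p Y y * condProb p X x Y y = pr p {ω | X ω = x ∧ Y ω = y} := by
  unfold condProb
  split_ifs with hy
  · have joint_le : pr p {ω | X ω = x ∧ Y ω = y} ≤ prEq p Y y := pr_mono hp fun _ h ↦ h.2
    rw [mul_zero]
    exact (pr_nonneg hp _).antisymm (joint_le.trans_eq hy)
  · exact mul_div_cancel₀ _ hy

end Probability

section Predictability

variable {Ω 𝒳 𝒴 : Type*} [Fintype Ω] [Fintype 𝒳] [Nonempty 𝒳] {p : Ω → ℝ}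

/-- The predictability of `X`: the best success probability of guessing `X` blindly. The min-entropy
of `X` is minus its binary logarithm. -/
noncomputable def predictability (p : Ω → ℝ) (X : Ω → 𝒳) : ℝ :=
  univ.sup' univ_nonempty fun x ↦ prEq p X x

/-- The average predictability of `X` given `Y`: the best success probability of guessing `X` after
observing `Y`. The average min-entropy of `X` given `Y` is minus its binary logarithm. -/
noncomputable def avgPredictability [Fintype 𝒴] (p : Ω → ℝ) (X : Ω → 𝒳) (Y : Ω → 𝒴) : ℝ :=
  ∑ y, prEq p Y y * univ.sup' univ_nonempty fun x ↦ condProb p X x Y y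

theorem minEntropy_eq_neg_logb_predictability (p : Ω → ℝ) (X : Ω → 𝒳) :
    minEntropy p X = -logb 2 (predictability p X) :=
  rfl

theorem avgMinEntropy_eq_neg_logb_avgPredictability [Fintype 𝒴]
    (p : Ω → ℝ) (X : Ω → 𝒳) (Y : Ω → 𝒴) :
    avgMinEntropy p X Y = -logb 2 (avgPredictability p X Y) :=
  rfl

theorem prEq_le_predictability (p : Ω → ℝ) (X : Ω → 𝒳) (x : 𝒳) :
    prEq p X x ≤ predictability p X :=
  le_sup' (prEq p X) (mem_univ x)

theorem predictability_pos (hpos : 0 < ∑ ω, p ω) (X : Ω → 𝒳) : 0 < predictability p X := by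
  rw [← sum_prEq p X] at hpos
  obtain ⟨x, -, hx⟩ := exists_lt_of_sum_lt (sum_const_zero.trans_lt hpos)
  exact hx.trans_le (prEq_le_predictability p X x)

theorem avgPredictability_eq_sum_sup' [Fintype 𝒴] (hp : ∀ ω, 0 ≤ p ω)
    (X : Ω → 𝒳) (Y : Ω → 𝒴) :
    avgPredictability p X Y =
      ∑ y, univ.sup' univ_nonempty fun x ↦ pr p {ω | X ω = x ∧ Y ω = y} := by
  refine sum_congr rfl fun y _ ↦ ?_
  have prEq_nonneg : 0 ≤ prEq p Y y := pr_nonneg hp _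
  rw [mul₀_sup' prEq_nonneg]
  simp only [prEq_mul_condProb hp]

theorem predictability_le_avgPredictability [Fintype 𝒴] (hp : ∀ ω, 0 ≤ p ω)
    (X : Ω → 𝒳) (Y : Ω → 𝒴) : predictability p X ≤ avgPredictability p X Y := by
  rw [avgPredictability_eq_sum_sup' hp]
  refine sup'_le _ _ fun x _ ↦ ?_
  calc
    prEq p X x = ∑ y, pr p {ω | X ω = x ∧ Y ω = y} := (sum_pr_inter_fiber p _ Y).symm
    _ ≤ ∑ y, univ.sup' univ_nonempty fun x ↦ pr p {ω | X ω = x ∧ Y ω = y} :=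
      sum_le_sum fun y _ ↦ le_sup' (fun x ↦ pr p {ω | X ω = x ∧ Y ω = y}) (mem_univ x)

theorem avgPredictability_le_card_mul_predictability [Fintype 𝒴] (hp : ∀ ω, 0 ≤ p ω)
    (X : Ω → 𝒳) (Y : Ω → 𝒴) :
    avgPredictability p X Y ≤ Fintype.card 𝒴 * predictability p X := by
  rw [avgPredictability_eq_sum_sup' hp, ← nsmul_eq_mul]
  refine sum_le_card_nsmul _ _ _ fun y _ ↦ sup'_mono_fun fun x _ ↦ ?_
  exact pr_mono hp fun _ h ↦ h.1

end Predictability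

theorem stmt_5_general {Ω 𝒳 𝒵 : Type*} [Fintype Ω] [Fintype 𝒳] [Nonempty 𝒳] [Fintype 𝒵]
    (p : Ω → ℝ) (hp : ∀ ω, 0 ≤ p ω) (hpos : 0 < ∑ ω, p ω) (X : Ω → 𝒳) (Z : Ω → 𝒵) :
    avgMinEntropy p X Z ≥ minEntropy p X - logb 2 (Fintype.card 𝒵) := by
  have pred_pos : 0 < predictability p X := predictability_pos hpos X
  have avg_pos : 0 < avgPredictability p X Z :=
    pred_pos.trans_le (predictability_le_avgPredictability hp X Z)
  have avg_le := avgPredictability_le_card_mul_predictability hp X Z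
  have card_pos : (0 : ℝ) < Fintype.card 𝒵 :=
    pos_of_mul_pos_left (avg_pos.trans_le avg_le) pred_pos.le
  have logb_le : logb 2 (avgPredictability p X Z) ≤
      logb 2 (Fintype.card 𝒵) + logb 2 (predictability p X) := by
    rw [← logb_mul card_pos.ne' pred_pos.ne']
    exact logb_le_logb_of_le one_lt_two avg_pos avg_le
  rw [avgMinEntropy_eq_neg_logb_avgPredictability, minEntropy_eq_neg_logb_predictability]
  linarith

theorem stmt_5 {Ω 𝒳 𝒵 : Type*} [Fintype Ω]
    [Fintype 𝒳] [Nonempty 𝒳] [Fintype 𝒵] [Nonempty 𝒵]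
    (p : Ω → ℝ) (hp : ∀ ω, 0 ≤ p ω) (hsum : ∑ ω, p ω = 1)
    (X : Ω → 𝒳) (Z : Ω → 𝒵) :
    avgMinEntropy p X Z ≥ minEntropy p X - Real.logb 2 (Fintype.card 𝒵) :=
  stmt_5_general p hp (hsum ▸ one_pos) X Z
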